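/- Soundness and completeness of DL with respect to the model-theoretic semantics: for every propositional defeasible theory T and every conclusion c, T ⊢ c if and only if c holds in every defeasible model of T. -/

import Mathlib

/-- A literal is an atom or its negation. -/
inductive Lit (Atom : Type) where
  | pos : Atom → Lit Atom
  | neg : Atom → Lit Atom
  deriving DecidableEq

/-- The complement `~q` of a literal `q`. -/
def Lit.compl {Atom : Type} : Lit Atom → Lit Atom
  | .pos a => .neg a
  | .neg a => .pos a

/-- The three kinds of rules: strict, defeasible, defeater. -/
inductive RuleKind where
  | strict
  | defeasible
  | defeater
  deriving DecidableEq

/-- A rule: a kind, a finite set of literals as body (antecedent), and a head literal. -/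
structure DRule (Atom : Type) where
  kind : RuleKind
  body : Finset (Lit Atom)
  head : Lit Atom
  deriving DecidableEq

/-- A rule is strict-or-defeasible (a "supportive" rule). -/
def DRule.isSd {Atom : Type} (r : DRule Atom) : Prop :=
  r.kind = RuleKind.strict ∨ r.kind = RuleKind.defeasible

/-- A propositional defeasible theory: finite set of facts, finite set of rules,
and a superiority relation on rules. -/
structure DTheory (Atom : Type) where
  facts : Finset (Lit Atom)
  rules : Finset (DRule Atom)
  sup : DRule Atom → DRule Atom → Prop

/-- Acyclicity of the superiority relation. -/
def SupAcyclic {Atom : Type} (T : DTheory Atom) : Prop :=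
  ∀ r : DRule Atom, ¬ Relation.TransGen T.sup r r

/-- Conclusions: tagged literals +Δq, -Δq, +∂q, -∂q. -/
inductive Concl (Atom : Type) where
  | plusDelta : Lit Atom → Concl Atom
  | minusDelta : Lit Atom → Concl Atom
  | plusPartial : Lit Atom → Concl Atom
  | minusPartial : Lit Atom → Concl Atom
  deriving DecidableEq

/-- The inference rules of DL: `Licensed T prev c` holds when the conclusion `c`
may be appended to a derivation whose preceding part is `prev`. -/
def Licensed {Atom : Type} (T : DTheory Atom)
    (prev : List (Concl Atom)) : Concl Atom → Prop
  | .plusDelta q =>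
      q ∈ T.facts ∨
      ∃ r ∈ T.rules, r.kind = RuleKind.strict ∧ r.head = q ∧
        ∀ a ∈ r.body, Concl.plusDelta a ∈ prev
  | .minusDelta q =>
      q ∉ T.facts ∧
      ∀ r ∈ T.rules, r.kind = RuleKind.strict → r.head = q →
        ∃ a ∈ r.body, Concl.minusDelta a ∈ prev
  | .plusPartial q =>
      (Concl.plusDelta q ∈ prev) ∨
      ((∃ r ∈ T.rules, r.isSd ∧ r.head = q ∧
          ∀ a ∈ r.body, Concl.plusPartial a ∈ prev) ∧
       (Concl.minusDelta q.compl ∈ prev) ∧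
       ∀ s ∈ T.rules, s.head = q.compl →
         ((∃ a ∈ s.body, Concl.minusPartial a ∈ prev) ∨
          (∃ t ∈ T.rules, t.isSd ∧ t.head = q ∧ T.sup t s ∧
            ∀ a ∈ t.body, Concl.plusPartial a ∈ prev)))
  | .minusPartial q =>
      (Concl.minusDelta q ∈ prev) ∧
      ((∀ r ∈ T.rules, r.isSd → r.head = q →
          ∃ a ∈ r.body, Concl.minusPartial a ∈ prev) ∨
       (Concl.plusDelta q.compl ∈ prev) ∨
       (∃ s ∈ T.rules, s.head = q.compl ∧
          (∀ a ∈ s.body, Concl.plusPartial a ∈ prev) ∧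
          ∀ t ∈ T.rules, t.isSd → t.head = q →
            ((∃ a ∈ t.body, Concl.minusPartial a ∈ prev) ∨ ¬ T.sup t s)))

/-- A derivation: each element of the sequence is licensed given the preceding part. -/
def DLDerivation {Atom : Type} (T : DTheory Atom)
    (P : List (Concl Atom)) : Prop :=
  ∀ i : Fin P.length, Licensed T (P.take i) (P.get i)

/-- `T ⊢ c`: some derivation in `T` ends with conclusion `c`. -/
def DLProves {Atom : Type} (T : DTheory Atom) (c : Concl Atom) : Prop :=
  ∃ P : List (Concl Atom), DLDerivation T P ∧ P.getLast? = some c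

/-- A defeasible interpretation: two partial functions from literals to booleans
(modelled as `Option Bool`-valued functions), `del` for definite knowledge (Δ) and
`par` for defeasible belief (∂). -/
structure DInterp (Atom : Type) where
  del : Lit Atom → Option Bool
  par : Lit Atom → Option Bool

/-- The coherence conditions on defeasible interpretations: what is known is believed,
and what is not believed is not known. -/
def DInterp.Coherent {Atom : Type} (I : DInterp Atom) : Prop :=
  (∀ q : Lit Atom, I.del q = some true → I.par q = some true) ∧
  (∀ q : Lit Atom, I.par q = some false → I.del q = some false)

open Classical in
/-- Kleene conjunction of a partial boolean function over a finite set of literals: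
`False` if some member maps to `False`, `True` if every member maps to `True`,
undefined otherwise. -/
noncomputable def kleeneAll {Atom : Type} (f : Lit Atom → Option Bool)
    (S : Finset (Lit Atom)) : Option Bool :=
  if ∃ a ∈ S, f a = some false then some false
  else if ∀ a ∈ S, f a = some true then some true
  else none

/-- The four model conditions (MΔ+), (MΔ-), (M∂+), (M∂-). -/
def ModelConditions {Atom : Type} (T : DTheory Atom)
    (I : DInterp Atom) : Prop :=
  (∀ q : Lit Atom,
    I.del q = some true ↔
      (q ∈ T.facts ∨
       ∃ r ∈ T.rules, r.kind = RuleKind.strict ∧ r.head = q ∧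
         kleeneAll I.del r.body = some true)) ∧
  (∀ q : Lit Atom,
    I.del q = some false ↔
      (q ∉ T.facts ∧
       ∀ r ∈ T.rules, r.kind = RuleKind.strict → r.head = q →
         kleeneAll I.del r.body = some false)) ∧
  (∀ q : Lit Atom,
    I.par q = some true ↔
      (I.del q = some true ∨
       ((∃ r ∈ T.rules, r.isSd ∧ r.head = q ∧ kleeneAll I.par r.body = some true) ∧
        I.del q.compl = some false ∧
        ∀ s ∈ T.rules, s.head = q.compl →
          (kleeneAll I.par s.body = some false ∨
           ∃ t ∈ T.rules, t.isSd ∧ t.head = q ∧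
             kleeneAll I.par t.body = some true ∧ T.sup t s)))) ∧
  (∀ q : Lit Atom,
    I.par q = some false ↔
      (I.del q = some false ∧
       ((∀ r ∈ T.rules, r.isSd → r.head = q → kleeneAll I.par r.body = some false) ∨
        I.del q.compl = some true ∨
        (∃ s ∈ T.rules, s.head = q.compl ∧ kleeneAll I.par s.body = some true ∧
          ∀ t ∈ T.rules, t.isSd → t.head = q →
            (kleeneAll I.par t.body = some false ∨ ¬ T.sup t s)))))

/-- A defeasible model of `T`: a defeasible interpretation (coherent pair of partial
functions) satisfying the four model conditions. -/
def IsModel {Atom : Type} (T : DTheory Atom) (I : DInterp Atom) : Prop :=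
  I.Coherent ∧ ModelConditions T I

/-- A conclusion holds in an interpretation. -/
def DLHolds {Atom : Type} (I : DInterp Atom) : Concl Atom → Prop
  | .plusDelta q => I.del q = some true
  | .minusDelta q => I.del q = some false
  | .plusPartial q => I.par q = some true
  | .minusPartial q => I.par q = some false

/-!
Licensing is a monotone operator on sets of conclusions. Since a theory has finitely many rules with
finite bodies, licensing is finitary, so the provable conclusions form the least fixed point of the
operator, whereas models correspond to its consistent fixed points. It remains to see that the least
fixed point `L` is itself consistent. The conditions for `-Δ` and `-∂` are the *strong negations* of
those for `+Δ` and `+∂`: the set of conclusions whose opposite is not in `S` licenses exactly the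
conclusions whose opposite `S` does not license. Hence the conclusions whose opposite is not in `L`
also form a fixed point. It contains the least one, so `L` never contains two opposite conclusions.
-/

section

variable {Atom : Type} {T : DTheory Atom} {S S' : Set (Concl Atom)} {c : Concl Atom}
  {P Q : List (Concl Atom)} {I : DInterp Atom}

/-- The inference rules of DL with an arbitrary, possibly infinite, set `S` of available
conclusions in place of the preceding part of a derivation. -/
def LicensedBy (T : DTheory Atom) (S : Set (Concl Atom)) : Concl Atom → Prop
  | .plusDelta q =>
      q ∈ T.facts ∨
      ∃ r ∈ T.rules, r.kind = .strict ∧ r.head = q ∧ ∀ a ∈ r.body, .plusDelta a ∈ S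
  | .minusDelta q =>
      q ∉ T.facts ∧
      ∀ r ∈ T.rules, r.kind = .strict → r.head = q → ∃ a ∈ r.body, .minusDelta a ∈ S
  | .plusPartial q =>
      .plusDelta q ∈ S ∨
      ((∃ r ∈ T.rules, r.isSd ∧ r.head = q ∧ ∀ a ∈ r.body, .plusPartial a ∈ S) ∧
       .minusDelta q.compl ∈ S ∧
       ∀ s ∈ T.rules, s.head = q.compl →
         ((∃ a ∈ s.body, .minusPartial a ∈ S) ∨
          (∃ t ∈ T.rules, t.isSd ∧ t.head = q ∧ T.sup t s ∧ ∀ a ∈ t.body, .plusPartial a ∈ S)))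
  | .minusPartial q =>
      .minusDelta q ∈ S ∧
      ((∀ r ∈ T.rules, r.isSd → r.head = q → ∃ a ∈ r.body, .minusPartial a ∈ S) ∨
       .plusDelta q.compl ∈ S ∨
       (∃ s ∈ T.rules, s.head = q.compl ∧ (∀ a ∈ s.body, .plusPartial a ∈ S) ∧
          ∀ t ∈ T.rules, t.isSd → t.head = q →
            ((∃ a ∈ t.body, .minusPartial a ∈ S) ∨ ¬ T.sup t s)))

theorem licensed_iff_licensedBy : Licensed T P c ↔ LicensedBy T {x | x ∈ P} c := by
  cases c <;> rfl

/-- The literal to which a conclusion attaches its tag. -/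
def Concl.lit : Concl Atom → Lit Atom
  | .plusDelta q | .minusDelta q | .plusPartial q | .minusPartial q => q

theorem Concl.finite_preimage_lit {L : Set (Lit Atom)} (hL : L.Finite) :
    (Concl.lit ⁻¹' L).Finite := by
  refine hL.preimage' fun q _ => Set.Finite.subset
    (Set.toFinite {.plusDelta q, .minusDelta q, .plusPartial q, .minusPartial q}) ?_
  rintro (_ | _ | _ | _) rfl <;> simp [Concl.lit]

/-- The conclusions on which the licensing of `c` can depend. This overapproximation, whatever the
tags and including the bodies of all rules, is enough for finiteness. -/
def DTheory.premises (T : DTheory Atom) (c : Concl Atom) : Set (Concl Atom) :=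
  Concl.lit ⁻¹' ({c.lit, c.lit.compl} ∪ ⋃ r ∈ T.rules, r.body)

theorem DTheory.finite_premises (T : DTheory Atom) (c : Concl Atom) : (T.premises c).Finite :=
  Concl.finite_preimage_lit <| (Set.toFinite _).union <|
    T.rules.finite_toSet.biUnion fun r _ => r.body.finite_toSet

theorem LicensedBy.of_inter_premises_subset (h : S ∩ T.premises c ⊆ S') (hc : LicensedBy T S c) :
    LicensedBy T S' c := by
  have mem_of_lit : ∀ x ∈ S, x.lit = c.lit → x ∈ S' := fun x hx hl =>
    h ⟨hx, by simp [DTheory.premises, hl]⟩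
  have mem_of_lit_compl : ∀ x ∈ S, x.lit = c.lit.compl → x ∈ S' := fun x hx hl =>
    h ⟨hx, by simp [DTheory.premises, hl]⟩
  have mem_of_lit_body : ∀ r ∈ T.rules, ∀ x ∈ S, x.lit ∈ r.body → x ∈ S' := fun r hr x hx hl =>
    h ⟨hx, .inr (Set.mem_biUnion hr hl)⟩
  cases c <;> grind [LicensedBy, Concl.lit]

theorem LicensedBy.mono (h : S ⊆ S') (hc : LicensedBy T S c) : LicensedBy T S' c :=
  hc.of_inter_premises_subset (Set.inter_subset_left.trans h)

/-- The immediate consequence operator of `T`, sending a set of conclusions to the set of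
conclusions it licenses. -/
def DTheory.consequence (T : DTheory Atom) : Set (Concl Atom) →o Set (Concl Atom) where
  toFun S := {c | LicensedBy T S c}
  monotone' _ _ h _ hc := hc.mono h

theorem DLDerivation.append_iff :
    DLDerivation T (P ++ Q) ↔
      DLDerivation T P ∧ ∀ i : Fin Q.length, Licensed T (P ++ Q.take i) (Q.get i) := by
  simp only [DLDerivation, Fin.forall_iff, List.get_eq_getElem]
  constructor
  · intro h
    refine ⟨fun i hi => ?_, fun i hi => ?_⟩
    · simpa [List.take_append_of_le_length hi.le, List.getElem_append_left hi] using
        h i (by rw [List.length_append]; omega)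
    · simpa [List.take_length_add_append] using h (P.length + i) (by simpa)
  · rintro ⟨hP, hQ⟩ i hi
    obtain hlt | ⟨j, rfl⟩ := (lt_or_ge i P.length).imp_right Nat.exists_eq_add_of_le
    · simpa [List.take_append_of_le_length hlt.le, List.getElem_append_left hlt] using hP i hlt
    · simpa [List.take_length_add_append] using hQ j (by simpa using hi)

theorem DLDerivation.licensed_of_mem (hP : DLDerivation T P) (hc : c ∈ P) : Licensed T P c := by
  obtain ⟨i, rfl⟩ := List.mem_iff_get.1 hc
  exact licensed_iff_licensedBy.2 <|
    (licensed_iff_licensedBy.1 (hP i)).mono fun _ => List.mem_of_mem_take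

theorem DLDerivation.append (hP : DLDerivation T P) (hQ : DLDerivation T Q) :
    DLDerivation T (P ++ Q) := by
  refine append_iff.2 ⟨hP, fun i => ?_⟩
  exact licensed_iff_licensedBy.2 <|
    (licensed_iff_licensedBy.1 (hQ i)).mono fun _ => List.mem_append_right P

theorem DLDerivation.concat (hP : DLDerivation T P) (hc : Licensed T P c) :
    DLDerivation T (P ++ [c]) :=
  append_iff.2 ⟨hP, by simpa using hc⟩

theorem DLDerivation.subset_of_consequence_le (hS : T.consequence S ≤ S) (hP : DLDerivation T P) :
    ∀ c ∈ P, c ∈ S := by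
  suffices ∀ (i : ℕ) (hi : i < P.length), P[i] ∈ S by
    intro c hc
    obtain ⟨i, hi, rfl⟩ := List.mem_iff_getElem.1 hc
    exact this i hi
  intro i
  induction i using Nat.strong_induction_on with
  | _ i ih =>
    intro hi
    refine hS ((licensed_iff_licensedBy.1 (hP ⟨i, hi⟩)).mono fun c hc => ?_)
    obtain ⟨j, hj, rfl⟩ := List.mem_take_iff_getElem.1 hc
    exact ih j (hj.trans_le (min_le_left _ _)) _

theorem dlProves_iff_exists_mem : DLProves T c ↔ ∃ P, DLDerivation T P ∧ c ∈ P := by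
  constructor
  · rintro ⟨P, hP, hc⟩
    exact ⟨P, hP, List.mem_of_getLast? hc⟩
  · rintro ⟨P, hP, hc⟩
    exact ⟨P ++ [c], hP.concat (hP.licensed_of_mem hc), List.getLast?_concat⟩

theorem exists_dlDerivation_of_finite (hS : S.Finite) (hprov : ∀ c ∈ S, DLProves T c) :
    ∃ P, DLDerivation T P ∧ ∀ c ∈ S, c ∈ P := by
  induction S, hS using Set.Finite.induction_on with
  | empty => exact ⟨[], fun i => i.elim0, by simp⟩
  | @insert c S _ _ ih =>
    obtain ⟨hc, hSprov⟩ := Set.forall_mem_insert.1 hprov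
    obtain ⟨P, hP, hcP⟩ := dlProves_iff_exists_mem.1 hc
    obtain ⟨Q, hQ, hSQ⟩ := ih hSprov
    exact ⟨P ++ Q, hP.append hQ, Set.forall_mem_insert.2
      ⟨List.mem_append_left Q hcP, fun x hx => List.mem_append_right P (hSQ x hx)⟩⟩

theorem consequence_setOf_dlProves_le : T.consequence {c | DLProves T c} ≤ {c | DLProves T c} := by
  intro c hc
  obtain ⟨P, hP, hsub⟩ := exists_dlDerivation_of_finite
    ((T.finite_premises c).inter_of_right {x | DLProves T x}) fun _ hx => hx.1
  have hcP : Licensed T P c := licensed_iff_licensedBy.2 (hc.of_inter_premises_subset hsub)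
  exact ⟨P ++ [c], hP.concat hcP, List.getLast?_concat⟩

theorem dlProves_iff_mem_lfp : DLProves T c ↔ c ∈ T.consequence.lfp := by
  constructor
  · intro h
    obtain ⟨P, hP, hc⟩ := dlProves_iff_exists_mem.1 h
    exact hP.subset_of_consequence_le T.consequence.map_lfp.le c hc
  · intro h
    exact T.consequence.lfp_le consequence_setOf_dlProves_le h

/-- The opposite of a conclusion: same literal and same modality `Δ` or `∂`, other sign. -/
def Concl.opp : Concl Atom → Concl Atom
  | .plusDelta q => .minusDelta q
  | .minusDelta q => .plusDelta q
  | .plusPartial q => .minusPartial q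
  | .minusPartial q => .plusPartial q

/-- The strong negation of a set of conclusions: the conclusions whose opposite is absent. A set is
consistent when it is contained in its strong negation. -/
def strongNeg (S : Set (Concl Atom)) : Set (Concl Atom) := {c | c.opp ∉ S}

theorem consequence_strongNeg (T : DTheory Atom) (S : Set (Concl Atom)) :
    T.consequence (strongNeg S) = strongNeg (T.consequence S) := by
  ext c
  change LicensedBy T (strongNeg S) c ↔ ¬ LicensedBy T S c.opp
  cases c <;> simp only [LicensedBy, strongNeg, Concl.opp, Set.mem_ofPred_eq] <;> grind

theorem lfp_consequence_subset_strongNeg (T : DTheory Atom) :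
    T.consequence.lfp ⊆ strongNeg T.consequence.lfp :=
  T.consequence.lfp_le_fixed (by rw [consequence_strongNeg, T.consequence.map_lfp])

theorem kleeneAll_eq_some_true_iff {f : Lit Atom → Option Bool} {A : Finset (Lit Atom)} :
    kleeneAll f A = some true ↔ ∀ a ∈ A, f a = some true := by
  unfold kleeneAll
  split_ifs <;> grind

theorem kleeneAll_eq_some_false_iff {f : Lit Atom → Option Bool} {A : Finset (Lit Atom)} :
    kleeneAll f A = some false ↔ ∃ a ∈ A, f a = some false := by
  unfold kleeneAll
  split_ifs <;> grind

theorem Concl.forall_iff {p : Concl Atom → Prop} :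
    (∀ c, p c) ↔ (∀ q, p (.plusDelta q)) ∧ (∀ q, p (.minusDelta q)) ∧
      (∀ q, p (.plusPartial q)) ∧ ∀ q, p (.minusPartial q) :=
  ⟨fun h => ⟨fun _ => h _, fun _ => h _, fun _ => h _, fun _ => h _⟩,
    fun ⟨h₁, h₂, h₃, h₄⟩ c => c.casesOn h₁ h₂ h₃ h₄⟩

theorem modelConditions_iff :
    ModelConditions T I ↔ ∀ c, DLHolds I c ↔ LicensedBy T {x | DLHolds I x} c := by
  simp only [Concl.forall_iff, ModelConditions, LicensedBy, DLHolds, Set.mem_ofPred_eq,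
    kleeneAll_eq_some_true_iff, kleeneAll_eq_some_false_iff, and_comm (a := T.sup _ _)]

theorem isModel_iff_consequence_eq :
    IsModel T I ↔ T.consequence {c | DLHolds I c} = {c | DLHolds I c} := by
  have hfix : ModelConditions T I ↔ T.consequence {c | DLHolds I c} = {c | DLHolds I c} := by
    rw [modelConditions_iff, eq_comm, Set.ext_iff]
    rfl
  refine ⟨fun h => hfix.1 h.2, fun h => ⟨⟨fun q hq => ?_, fun q hq => ?_⟩, hfix.2 h⟩⟩
  · have : .plusPartial q ∈ T.consequence {c | DLHolds I c} := .inl hq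
    exact h.le this
  · have : .minusPartial q ∈ T.consequence {c | DLHolds I c} := h.ge hq
    exact this.1

open Classical in
/-- The interpretation in which exactly the conclusions of a consistent set `S` hold; where `S` is
inconsistent, the positive conclusion prevails. -/
noncomputable def DInterp.ofSet (S : Set (Concl Atom)) : DInterp Atom where
  del q := if .plusDelta q ∈ S then some true else if .minusDelta q ∈ S then some false else none
  par q :=
    if .plusPartial q ∈ S then some true else if .minusPartial q ∈ S then some false else none

theorem dlHolds_ofSet_iff (hS : S ⊆ strongNeg S) : DLHolds (.ofSet S) c ↔ c ∈ S := by
  have hc : c ∈ S → c.opp ∉ S := @hS c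
  cases c <;> grind [DLHolds, DInterp.ofSet, Concl.opp]

theorem isModel_ofSet (hS : S ⊆ strongNeg S) (hfix : T.consequence S = S) :
    IsModel T (.ofSet S) := by
  rw [isModel_iff_consequence_eq]
  simpa only [dlHolds_ofSet_iff hS, Set.ofPred_mem_eq] using hfix

theorem DL_sound_complete_general (T : DTheory Atom) (c : Concl Atom) :
    DLProves T c ↔ ∀ I : DInterp Atom, IsModel T I → DLHolds I c := by
  rw [dlProves_iff_mem_lfp]
  constructor
  · intro hc I hI
    exact T.consequence.lfp_le_fixed (isModel_iff_consequence_eq.1 hI) hc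
  · intro h
    have hcons := lfp_consequence_subset_strongNeg T
    exact (dlHolds_ofSet_iff hcons).1 (h _ (isModel_ofSet hcons T.consequence.map_lfp))

end

/-- Soundness and completeness of DL with respect to the model-theoretic semantics. -/
theorem DL_sound_complete {Atom : Type} [Countable Atom] [DecidableEq Atom]
    (T : DTheory Atom) (hacyc : SupAcyclic T) (c : Concl Atom) :
    DLProves T c ↔ ∀ I : DInterp Atom, IsModel T I → DLHolds I c :=
  DL_sound_complete_general T c
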